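/- Assume the sub-critical range q > 1 and (2/3)q + 1 < p < q + 2/3, and let M < ∞. Let A_M be the set of all injective, arc-length parametrized curves γ ∈ C¹(ℝ/ℤ,ℝⁿ) with E_{p,q}(γ) ≤ M. Then A_M is sequentially compact in C¹ up to translations: for every sequence (γ_k) ⊂ A_M there exist a subsequence (γ_{k_j}), points b_j ∈ ℝⁿ, and a curve γ₀ ∈ A_M such that γ_{k_j} − b_j converges to γ₀ in C¹(ℝ/ℤ,ℝⁿ). -/

import Mathlib

open MeasureTheory Set Filter Topology
open scoped ENNReal

noncomputable section

/-- The area `|a ∧ b|` of the parallelogram spanned by `a, b ∈ ℝⁿ`. -/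
def wedgeNorm {n : ℕ} (a b : EuclideanSpace ℝ (Fin n)) : ℝ :=
  Real.sqrt (‖a‖ ^ 2 * ‖b‖ ^ 2 - (inner ℝ a b : ℝ) ^ 2)

/-- `1 / R^{p,q}(x,y,z) = |(y-x) ∧ (z-x)|^q / (|y-z| |y-x| |z-x|)^p`. -/
def invR {n : ℕ} (p q : ℝ) (x y z : EuclideanSpace ℝ (Fin n)) : ℝ :=
  wedgeNorm (y - x) (z - x) ^ q / (‖y - z‖ * ‖y - x‖ * ‖z - x‖) ^ p

/-- The generalized integral Menger curvature `E_{p,q}` of a closed curve,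
modelled by a `1`-periodic function together with its derivative,
the parameter domain `ℝ/ℤ` being represented by `[0,1)`; values in `[0,∞]`. -/
def menger {n : ℕ} (p q : ℝ) (γ γ' : ℝ → EuclideanSpace ℝ (Fin n)) : ℝ≥0∞ :=
  ∫⁻ u₁ in Ico (0:ℝ) 1, ∫⁻ u₂ in Ico (0:ℝ) 1, ∫⁻ u₃ in Ico (0:ℝ) 1,
    ENNReal.ofReal (‖γ' u₁‖ * ‖γ' u₂‖ * ‖γ' u₃‖ * invR p q (γ u₁) (γ u₂) (γ u₃))

/-- Injectivity of a `1`-periodic curve as a map on `ℝ/ℤ`. -/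
def InjCircle {n : ℕ} (γ : ℝ → EuclideanSpace ℝ (Fin n)) : Prop :=
  ∀ u v : ℝ, γ u = γ v → ∃ k : ℤ, v = u + k

/-- Distance on `ℝ/ℤ`. -/
def circleDist (u v : ℝ) : ℝ := ⨅ k : ℤ, |u - v - (k : ℝ)|

/-- The `ρ`-th power of the Sobolev–Slobodeckiĭ seminorm `[f]_{W^{1+s,ρ}}`
of a periodic function with derivative `f'`; values in `[0,∞]`. -/
def sobSemiPow {n : ℕ} (s ρ : ℝ) (f' : ℝ → EuclideanSpace ℝ (Fin n)) : ℝ≥0∞ :=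
  ∫⁻ u in Ico (0:ℝ) 1, ∫⁻ w in Icc (-(1/2) : ℝ) (1/2),
    ENNReal.ofReal (‖f' (u + w) - f' u‖ ^ ρ / |w| ^ (1 + ρ * s))

/-- The norm `‖f‖_{W^{1+s,ρ}} = ‖f‖_{W^{1,ρ}} + [f]_{W^{1+s,ρ}}`. -/
def sobNorm {n : ℕ} (s ρ : ℝ) (f f' : ℝ → EuclideanSpace ℝ (Fin n)) : ℝ :=
  (∫ u in Ico (0:ℝ) 1, ‖f u‖ ^ ρ) ^ (1/ρ) + (∫ u in Ico (0:ℝ) 1, ‖f' u‖ ^ ρ) ^ (1/ρ)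
    + (sobSemiPow s ρ f').toReal ^ (1/ρ)

/-- `γ` is a closed `W^{1,1}` curve with weak derivative `γ'`:
both are `1`-periodic, `γ'` is measurable and `γ` is the primitive of `γ'`. -/
structure CurvePair {n : ℕ} (γ γ' : ℝ → EuclideanSpace ℝ (Fin n)) : Prop where
  periodic : Function.Periodic γ 1
  periodic' : Function.Periodic γ' 1
  meas' : Measurable γ'
  primitive : ∀ u, γ u = γ 0 + ∫ t in (0:ℝ)..u, γ' t

/-- Membership in the set `A_M` of injective arc-length parametrized `C¹`
closed curves of energy at most `M`. -/
def InAM {n : ℕ} (p q M : ℝ) (γ : ℝ → EuclideanSpace ℝ (Fin n)) : Prop :=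
  ContDiff ℝ 1 γ ∧ Function.Periodic γ 1 ∧ InjCircle γ ∧
    (∀ u, ‖deriv γ u‖ = 1) ∧ menger p q γ (deriv γ) ≤ ENNReal.ofReal M

/-! Three points of the curve lying within distance `r` of each other and spanning an area `m` can
be moved along the curve by a length comparable to `m / r` without losing more than half of the
area. Integrating over these positions bounds the energy from below, so an energy bound forces
`m ≤ B * r ^ (2 + α)`, where `α = (3 * p - 2 * q - 3) / (q + 3)` is positive precisely because
`2 / 3 * q + 1 < p`.

Comparing the secants from a point at dyadic scales, this flatness becomes a modulus of continuity
of the tangent that does not depend on the curve. It also yields a uniform chord-arc bound: where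
the distance to a fixed point of the curve has a small positive local minimum, the chord is
orthogonal to the curve and spans with it an area too large to be allowed.

The Arzelà–Ascoli theorem, applied to the curves and to their tangents, now provides a `C¹` limit.
The chord-arc bound makes the limit injective, and Fatou's lemma gives it the energy bound. -/

section Wedge

variable {n : ℕ}

lemma wedgeNorm_nonneg (a b : EuclideanSpace ℝ (Fin n)) : 0 ≤ wedgeNorm a b :=
  Real.sqrt_nonneg _

lemma wedgeNorm_sq (a b : EuclideanSpace ℝ (Fin n)) :
    wedgeNorm a b ^ 2 = ‖a‖ ^ 2 * ‖b‖ ^ 2 - inner ℝ a b ^ 2 := by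
  refine Real.sq_sqrt (sub_nonneg.2 ?_)
  rw [← mul_pow, sq_le_sq, abs_of_nonneg (by positivity : 0 ≤ ‖a‖ * ‖b‖)]
  exact abs_real_inner_le_norm a b

lemma wedgeNorm_comm (a b : EuclideanSpace ℝ (Fin n)) : wedgeNorm a b = wedgeNorm b a := by
  simp only [wedgeNorm, real_inner_comm a b, mul_comm]

@[simp] lemma wedgeNorm_self (a : EuclideanSpace ℝ (Fin n)) : wedgeNorm a a = 0 := by
  rw [wedgeNorm, real_inner_self_eq_norm_sq, ← sq, sub_self, Real.sqrt_zero]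

@[simp] lemma wedgeNorm_zero_left (a : EuclideanSpace ℝ (Fin n)) : wedgeNorm 0 a = 0 := by
  simp [wedgeNorm]

@[simp] lemma wedgeNorm_zero_right (a : EuclideanSpace ℝ (Fin n)) : wedgeNorm a 0 = 0 := by
  simp [wedgeNorm]

lemma continuous_wedgeNorm :
    Continuous fun x : EuclideanSpace ℝ (Fin n) × EuclideanSpace ℝ (Fin n) =>
      wedgeNorm x.1 x.2 := by
  unfold wedgeNorm
  fun_prop

lemma wedgeNorm_le_norm_mul_norm (a b : EuclideanSpace ℝ (Fin n)) :
    wedgeNorm a b ≤ ‖a‖ * ‖b‖ :=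
  Real.sqrt_le_iff.2 ⟨by positivity, by nlinarith [sq_nonneg (inner ℝ a b)]⟩

lemma wedgeNorm_of_inner_eq_zero {a b : EuclideanSpace ℝ (Fin n)} (h : inner ℝ a b = 0) :
    wedgeNorm a b = ‖a‖ * ‖b‖ := by
  rw [wedgeNorm, h, zero_pow two_ne_zero, sub_zero, ← mul_pow, Real.sqrt_sq (by positivity)]

lemma wedgeNorm_eq_norm_smul_sub_smul (a b : EuclideanSpace ℝ (Fin n)) :
    wedgeNorm a b = ‖‖a‖ • b - (inner ℝ a b / ‖a‖) • a‖ := by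
  refine (pow_left_inj₀ (wedgeNorm_nonneg _ _) (norm_nonneg _) two_ne_zero).1 ?_
  rw [wedgeNorm_sq, norm_sub_sq_real, norm_smul, norm_smul, real_inner_smul_left,
    real_inner_smul_right, real_inner_comm]
  rcases eq_or_ne a 0 with rfl | ha
  · simp
  have : ‖a‖ ≠ 0 := norm_ne_zero_iff.2 ha
  simp only [norm_div, Real.norm_eq_abs, mul_pow, div_pow, sq_abs]
  field_simp
  ring

lemma wedgeNorm_add_right_le (a b c : EuclideanSpace ℝ (Fin n)) :
    wedgeNorm a (b + c) ≤ wedgeNorm a b + wedgeNorm a c := by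
  simp only [wedgeNorm_eq_norm_smul_sub_smul]
  refine le_trans (le_of_eq ?_) (norm_add_le _ _)
  rw [inner_add_right, add_div]
  congr 1
  module

lemma wedgeNorm_add_self_right (a b : EuclideanSpace ℝ (Fin n)) :
    wedgeNorm a (b + a) = wedgeNorm a b := by
  rw [wedgeNorm, wedgeNorm, inner_add_right, norm_add_sq_real, real_inner_self_eq_norm_sq,
    real_inner_comm]
  ring_nf

lemma wedgeNorm_smul_right (c : ℝ) (a b : EuclideanSpace ℝ (Fin n)) :
    wedgeNorm a (c • b) = |c| * wedgeNorm a b := by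
  rw [wedgeNorm_eq_norm_smul_sub_smul, wedgeNorm_eq_norm_smul_sub_smul, ← Real.norm_eq_abs,
    ← norm_smul, real_inner_smul_right]
  congr 1
  module

lemma wedgeNorm_smul_left (c : ℝ) (a b : EuclideanSpace ℝ (Fin n)) :
    wedgeNorm (c • a) b = |c| * wedgeNorm a b := by
  rw [wedgeNorm_comm, wedgeNorm_smul_right, wedgeNorm_comm]

lemma wedgeNorm_le_add_norm_mul_norm_sub (a b b' : EuclideanSpace ℝ (Fin n)) :
    wedgeNorm a b ≤ wedgeNorm a b' + ‖a‖ * ‖b - b'‖ := by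
  calc wedgeNorm a b = wedgeNorm a (b' + (b - b')) := by rw [add_sub_cancel]
    _ ≤ wedgeNorm a b' + wedgeNorm a (b - b') := wedgeNorm_add_right_le _ _ _
    _ ≤ wedgeNorm a b' + ‖a‖ * ‖b - b'‖ := by gcongr; exact wedgeNorm_le_norm_mul_norm _ _

lemma wedgeNorm_le_add_add (a b a' b' : EuclideanSpace ℝ (Fin n)) :
    wedgeNorm a b ≤ wedgeNorm a' b' + ‖a - a'‖ * ‖b'‖ + ‖a‖ * ‖b - b'‖ := by
  have hb := wedgeNorm_le_add_norm_mul_norm_sub a b b'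
  have ha := wedgeNorm_le_add_norm_mul_norm_sub b' a a'
  rw [wedgeNorm_comm b', wedgeNorm_comm b', mul_comm] at ha
  linarith

lemma norm_sub_le_wedgeNorm_of_inner_nonneg {a b : EuclideanSpace ℝ (Fin n)} (ha : ‖a‖ = 1)
    (hb : ‖b‖ = 1) (hab : 0 ≤ inner ℝ a b) : ‖a - b‖ ≤ 3 / 2 * wedgeNorm a b := by
  have hw := wedgeNorm_nonneg a b
  refine (pow_le_pow_iff_left₀ (norm_nonneg _) (by positivity) two_ne_zero).1 ?_
  rw [mul_pow, wedgeNorm_sq, norm_sub_sq_real, ha, hb]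
  have hc : inner ℝ a b ≤ 1 := by simpa [ha, hb] using real_inner_le_norm a b
  nlinarith

lemma le_norm_of_norm_sub_le {E : Type*} [SeminormedAddCommGroup E] {a e : E} (he : ‖e‖ = 1)
    (ha : ‖a - e‖ ≤ 1 / 4) : 3 / 4 ≤ ‖a‖ := by
  have := norm_sub_norm_le e a
  rw [norm_sub_rev] at this
  linarith

lemma inner_nonneg_of_norm_sub_le {E : Type*} [NormedAddCommGroup E] [InnerProductSpace ℝ E]
    {a b e : E} (he : ‖e‖ = 1) (ha : ‖a - e‖ ≤ 1 / 4) (hb : ‖b - e‖ ≤ 1 / 4) :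
    0 ≤ inner ℝ a b := by
  have expand : inner ℝ a b =
      inner ℝ (a - e) (b - e) + inner ℝ (a - e) e + inner ℝ e (b - e) + 1 := by
    simp only [inner_sub_left, inner_sub_right, real_inner_self_eq_norm_sq, he]
    ring
  have hab := neg_le_of_abs_le (abs_real_inner_le_norm (a - e) (b - e))
  have hae := neg_le_of_abs_le (abs_real_inner_le_norm (a - e) e)
  have heb := neg_le_of_abs_le (abs_real_inner_le_norm e (b - e))
  have hmul : ‖a - e‖ * ‖b - e‖ ≤ 1 / 4 * (1 / 4) := by gcongr
  rw [he] at hae heb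
  linarith

lemma norm_normalize_sub_normalize_le {a b e : EuclideanSpace ℝ (Fin n)} (he : ‖e‖ = 1)
    (ha : ‖a - e‖ ≤ 1 / 4) (hb : ‖b - e‖ ≤ 1 / 4) :
    ‖NormedSpace.normalize a - NormedSpace.normalize b‖ ≤ 3 * wedgeNorm a b := by
  have ha' := le_norm_of_norm_sub_le he ha
  have hb' := le_norm_of_norm_sub_le he hb
  have ha0 : 0 < ‖a‖ := by linarith
  have hb0 : 0 < ‖b‖ := by linarith
  have hw := wedgeNorm_nonneg a b
  calc ‖NormedSpace.normalize a - NormedSpace.normalize b‖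
      ≤ 3 / 2 * wedgeNorm (NormedSpace.normalize a) (NormedSpace.normalize b) := by
        refine norm_sub_le_wedgeNorm_of_inner_nonneg
          (NormedSpace.norm_normalize (norm_pos_iff.1 ha0))
          (NormedSpace.norm_normalize (norm_pos_iff.1 hb0)) ?_
        rw [NormedSpace.normalize, NormedSpace.normalize, real_inner_smul_left,
          real_inner_smul_right]
        have := inner_nonneg_of_norm_sub_le he ha hb
        positivity
    _ = 3 / 2 * (‖a‖⁻¹ * (‖b‖⁻¹ * wedgeNorm a b)) := by
        simp only [NormedSpace.normalize, wedgeNorm_smul_left, wedgeNorm_smul_right, abs_inv,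
          abs_norm, mul_left_comm]
    _ ≤ 3 / 2 * ((3 / 4)⁻¹ * ((3 / 4)⁻¹ * wedgeNorm a b)) := by gcongr
    _ ≤ 3 * wedgeNorm a b := by linarith

end Wedge

section Energy

variable {n : ℕ}

lemma setLIntegral_Ico_eq_of_periodic {f : ℝ → ℝ≥0∞} (hf : Function.Periodic f 1) (a : ℝ) :
    ∫⁻ u in Ico (0 : ℝ) 1, f u = ∫⁻ u in Ico a (a + 1), f u := by
  rw [setLIntegral_congr Ico_ae_eq_Ioc, setLIntegral_congr (Ico_ae_eq_Ioc (a := a))]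
  simpa using (isAddFundamentalDomain_Ioc one_pos 0 volume).setLIntegral_eq
    (isAddFundamentalDomain_Ioc one_pos a volume) f hf.map_vadd_zmultiples

lemma mul_le_setLIntegral_Ico_of_periodic {f : ℝ → ℝ≥0∞} (hf : Function.Periodic f 1) {a h : ℝ}
    (h1 : h ≤ 1) {c : ℝ≥0∞} (hc : ∀ u ∈ Ico a (a + h), c ≤ f u) :
    c * ENNReal.ofReal h ≤ ∫⁻ u in Ico (0 : ℝ) 1, f u := by
  rw [setLIntegral_Ico_eq_of_periodic hf a]
  calc c * ENNReal.ofReal h = ∫⁻ _ in Ico a (a + h), c := by simp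
    _ ≤ ∫⁻ u in Ico a (a + h), f u := setLIntegral_mono' measurableSet_Ico hc
    _ ≤ _ := lintegral_mono_set (Ico_subset_Ico_right (by linarith))

lemma ofReal_mul_pow_three_le_menger {p q c h : ℝ} {γ γ' : ℝ → EuclideanSpace ℝ (Fin n)}
    (hper : Function.Periodic γ 1) (hunit : ∀ u, ‖γ' u‖ = 1) (h0 : 0 ≤ h) (h1 : h ≤ 1)
    {u v w : ℝ} (hc : ∀ u' ∈ Ico u (u + h), ∀ v' ∈ Ico v (v + h), ∀ w' ∈ Ico w (w + h),
      c ≤ invR p q (γ u') (γ v') (γ w')) :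
    ENNReal.ofReal (c * h ^ 3) ≤ menger p q γ γ' := by
  rw [pow_three', ← mul_assoc, ← mul_assoc, ENNReal.ofReal_mul' h0, ENNReal.ofReal_mul' h0,
    ENNReal.ofReal_mul' h0]
  simp only [menger, hunit, one_mul]
  refine mul_le_setLIntegral_Ico_of_periodic (a := u) (fun x => by simp [hper x]) h1
    fun u' hu => ?_
  refine mul_le_setLIntegral_Ico_of_periodic (a := v) (fun x => by simp [hper x]) h1
    fun v' hv => ?_
  refine mul_le_setLIntegral_Ico_of_periodic (a := w) (fun x => by simp [hper x]) h1
    fun w' hw => ?_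
  exact ENNReal.ofReal_le_ofReal (hc u' hu v' hv w' hw)

lemma rpow_div_rpow_le_invR {p q r m : ℝ} (hp : 0 < p) (hq : 0 < q) (hm : 0 < m)
    {x y z : EuclideanSpace ℝ (Fin n)} (hw : m ≤ wedgeNorm (y - x) (z - x))
    (hyz : dist y z ≤ r) (hyx : dist y x ≤ r) (hzx : dist z x ≤ r) :
    m ^ q / (r ^ 3) ^ p ≤ invR p q x y z := by
  have hw0 : 0 < wedgeNorm (y - x) (z - x) := hm.trans_le hw
  have hyx0 : y ≠ x := by rintro rfl; simp at hw0
  have hzx0 : z ≠ x := by rintro rfl; simp at hw0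
  have hyz0 : y ≠ z := by rintro rfl; simp at hw0
  have hyx1 := dist_pos.2 hyx0
  have hzx1 := dist_pos.2 hzx0
  have hyz1 := dist_pos.2 hyz0
  have hr : 0 < r := hyx1.trans_le hyx
  simp only [invR, ← dist_eq_norm]
  have hprod : dist y z * dist y x * dist z x ≤ r ^ 3 := by
    rw [pow_three']
    gcongr
  gcongr

lemma dist_le_of_dist_le_of_dist_le {X : Type*} [PseudoMetricSpace X] {x y x' y' : X} {h d : ℝ}
    (hx : dist x' x ≤ h) (hy : dist y' y ≤ h) (hxy : dist x y ≤ d) : dist x' y' ≤ d + 2 * h := by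
  have := dist_triangle4 x' x y y'
  rw [dist_comm y y'] at this
  linarith

lemma wedgeNorm_sub_sub_le {x y z x' y' z' : EuclideanSpace ℝ (Fin n)} {r h : ℝ}
    (hyx : dist y x ≤ r) (hzx : dist z x ≤ r) (hx : dist x' x ≤ h) (hy : dist y' y ≤ h)
    (hz : dist z' z ≤ h) (hhr : h ≤ r / 2) :
    wedgeNorm (y - x) (z - x) ≤ wedgeNorm (y' - x') (z' - x') + 6 * r * h := by
  have hr : 0 ≤ r := dist_nonneg.trans hyx
  have hh : 0 ≤ h := dist_nonneg.trans hx
  have move {a a' : EuclideanSpace ℝ (Fin n)} (ha : dist a' a ≤ h) :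
      ‖a - x - (a' - x')‖ ≤ 2 * h := by
    rw [← dist_eq_norm]
    refine (dist_sub_sub_le a x a' x').trans ?_
    rw [dist_comm a, dist_comm x]
    linarith
  have hz' : ‖z' - x'‖ ≤ 2 * r := by
    rw [← dist_eq_norm]
    linarith [dist_le_of_dist_le_of_dist_le hz hx hzx]
  calc wedgeNorm (y - x) (z - x)
      ≤ wedgeNorm (y' - x') (z' - x') + ‖y - x - (y' - x')‖ * ‖z' - x'‖
        + ‖y - x‖ * ‖z - x - (z' - x')‖ := wedgeNorm_le_add_add _ _ _ _
    _ ≤ wedgeNorm (y' - x') (z' - x') + 2 * h * (2 * r) + r * (2 * h) := by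
        gcongr
        exacts [move hy, (dist_eq_norm y x).symm.trans_le hyx, move hz]
    _ = wedgeNorm (y' - x') (z' - x') + 6 * r * h := by ring

lemma le_invR_of_dist_le {p q r h : ℝ} (hp : 0 < p) (hq : 0 < q)
    {x y z x' y' z' : EuclideanSpace ℝ (Fin n)} (hyx : dist y x ≤ r) (hzx : dist z x ≤ r)
    (hx : dist x' x ≤ h) (hy : dist y' y ≤ h) (hz : dist z' z ≤ h) (hhr : h ≤ r / 2)
    (hm : 0 < wedgeNorm (y - x) (z - x)) (hh : 12 * r * h ≤ wedgeNorm (y - x) (z - x)) :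
    (wedgeNorm (y - x) (z - x) / 2) ^ q / ((3 * r) ^ 3) ^ p ≤ invR p q x' y' z' := by
  have hyz : dist y z ≤ 2 * r := by linarith [dist_triangle_right y z x]
  refine rpow_div_rpow_le_invR hp hq (by positivity) ?_ ?_ ?_ ?_
  · linarith [wedgeNorm_sub_sub_le hyx hzx hx hy hz hhr]
  · linarith [dist_le_of_dist_le_of_dist_le hy hz hyz]
  · linarith [dist_le_of_dist_le_of_dist_le hy hx hyx, dist_nonneg.trans hyx]
  · linarith [dist_le_of_dist_le_of_dist_le hz hx hzx, dist_nonneg.trans hyx]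

lemma dist_le_of_mem_Ico {X : Type*} [PseudoMetricSpace X] {γ : ℝ → X} (hγ : LipschitzWith 1 γ)
    {u v h : ℝ} (hv : v ∈ Ico u (u + h)) : dist (γ v) (γ u) ≤ h := by
  have := hγ.dist_le_mul v u
  rw [NNReal.coe_one, one_mul, Real.dist_eq, abs_of_nonneg (sub_nonneg.2 hv.1)] at this
  linarith [hv.2]

/-- Moving the three points along the curve by at most `h = m / (12 * r)`, where `m` is the area
they span, keeps the area above `m / 2`. -/
lemma ofReal_le_menger_of_wedgeNorm_pos {p q r : ℝ} (hp : 0 < p) (hq : 0 < q)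
    {γ γ' : ℝ → EuclideanSpace ℝ (Fin n)} (hper : Function.Periodic γ 1)
    (hlip : LipschitzWith 1 γ) (hunit : ∀ u, ‖γ' u‖ = 1) (hr : 0 < r) (hr1 : r ≤ 1) {u v w : ℝ}
    (hvu : dist (γ v) (γ u) ≤ r) (hwu : dist (γ w) (γ u) ≤ r)
    (hm : 0 < wedgeNorm (γ v - γ u) (γ w - γ u)) :
    ENNReal.ofReal ((wedgeNorm (γ v - γ u) (γ w - γ u) / 2) ^ q / ((3 * r) ^ 3) ^ p *
      (wedgeNorm (γ v - γ u) (γ w - γ u) / (12 * r)) ^ 3) ≤ menger p q γ γ' := by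
  have hmr : wedgeNorm (γ v - γ u) (γ w - γ u) ≤ r * r := by
    refine (wedgeNorm_le_norm_mul_norm _ _).trans ?_
    rw [← dist_eq_norm, ← dist_eq_norm]
    gcongr
  have hhr : wedgeNorm (γ v - γ u) (γ w - γ u) / (12 * r) ≤ r / 12 := by
    rw [div_le_iff₀ (by positivity)]
    linarith
  refine ofReal_mul_pow_three_le_menger (u := u) (v := v) (w := w) hper hunit (by positivity)
    (by linarith) fun u' hu v' hv w' hw => ?_
  exact le_invR_of_dist_le hp hq hvu hwu (dist_le_of_mem_Ico hlip hu)
    (dist_le_of_mem_Ico hlip hv) (dist_le_of_mem_Ico hlip hw) (by linarith) hm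
    (mul_div_cancel₀ _ (by positivity)).le

lemma wedgeNorm_rpow_le_of_menger_le {p q M r : ℝ} (hp : 0 < p) (hq : 0 < q)
    {γ γ' : ℝ → EuclideanSpace ℝ (Fin n)} (hper : Function.Periodic γ 1)
    (hlip : LipschitzWith 1 γ) (hunit : ∀ u, ‖γ' u‖ = 1)
    (hE : menger p q γ γ' ≤ ENNReal.ofReal M) (hr : 0 < r) (hr1 : r ≤ 1) {u v w : ℝ}
    (hvu : dist (γ v) (γ u) ≤ r) (hwu : dist (γ w) (γ u) ≤ r) :
    wedgeNorm (γ v - γ u) (γ w - γ u) ^ (q + 3) ≤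
      12 ^ 3 * 2 ^ q * 27 ^ p * |M| * r ^ (3 * p + 3) := by
  rcases (wedgeNorm_nonneg (γ v - γ u) (γ w - γ u)).eq_or_lt with hm | hm
  · rw [← hm, Real.zero_rpow (by positivity)]
    positivity
  have henergy := ofReal_le_menger_of_wedgeNorm_pos hp hq hper hlip hunit hr hr1 hvu hwu hm
  set m := wedgeNorm (γ v - γ u) (γ w - γ u)
  have hM : (m / 2) ^ q / ((3 * r) ^ 3) ^ p * (m / (12 * r)) ^ 3 ≤ |M| :=
    (ENNReal.ofReal_le_ofReal_iff (abs_nonneg M)).1 <|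
      henergy.trans (hE.trans (ENNReal.ofReal_le_ofReal (le_abs_self M)))
  calc m ^ (q + 3) = m ^ q * m ^ 3 := by rw [Real.rpow_add hm]; norm_cast
    _ = 12 ^ 3 * 2 ^ q * 27 ^ p * ((m / 2) ^ q / ((3 * r) ^ 3) ^ p * (m / (12 * r)) ^ 3) *
          ((r ^ 3) ^ p * r ^ 3) := by
        rw [Real.div_rpow hm.le (by norm_num), mul_pow 3 r,
          Real.mul_rpow (by positivity) (by positivity)]
        norm_num
        field_simp
        norm_num
    _ ≤ 12 ^ 3 * 2 ^ q * 27 ^ p * |M| * ((r ^ 3) ^ p * r ^ 3) := by gcongr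
    _ = 12 ^ 3 * 2 ^ q * 27 ^ p * |M| * r ^ (3 * p + 3) := by
        rw [Real.rpow_add hr, Real.rpow_mul hr.le]
        norm_cast

/-- Any two points of `γ` within distance `r ≤ 1` of a third one span with it an area of at most
`B * r ^ (2 + α)`. For `α = 0`, `B = 1` every curve has this property; for `α > 0` it quantifies
that `γ` is flat at small scales. -/
def AreaBound (B α : ℝ) (γ : ℝ → EuclideanSpace ℝ (Fin n)) : Prop :=
  ∀ ⦃u v w r : ℝ⦄, 0 < r → r ≤ 1 → dist (γ v) (γ u) ≤ r → dist (γ w) (γ u) ≤ r →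
    wedgeNorm (γ v - γ u) (γ w - γ u) ≤ B * r ^ (2 + α)

lemma areaBound_of_menger_le {p q M : ℝ} (hp : 0 < p) (hq : 0 < q)
    {γ γ' : ℝ → EuclideanSpace ℝ (Fin n)} (hper : Function.Periodic γ 1)
    (hlip : LipschitzWith 1 γ) (hunit : ∀ u, ‖γ' u‖ = 1)
    (hE : menger p q γ γ' ≤ ENNReal.ofReal M) :
    AreaBound ((12 ^ 3 * 2 ^ q * 27 ^ p * |M|) ^ (q + 3)⁻¹)
      ((3 * p - 2 * q - 3) / (q + 3)) γ := by
  intro u v w r hr hr1 hvu hwu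
  have hpow := wedgeNorm_rpow_le_of_menger_le hp hq hper hlip hunit hE hr hr1 hvu hwu
  rw [← Real.le_rpow_inv_iff_of_pos (wedgeNorm_nonneg _ _) (by positivity) (by positivity),
    Real.mul_rpow (by positivity) (by positivity), ← Real.rpow_mul hr.le] at hpow
  convert hpow using 3
  field_simp
  ring

lemma differentiable_of_norm_deriv_eq_one {E : Type*} [NormedAddCommGroup E] [NormedSpace ℝ E]
    {γ : ℝ → E} (hunit : ∀ u, ‖deriv γ u‖ = 1) : Differentiable ℝ γ := fun u =>
  differentiableAt_of_deriv_ne_zero (norm_ne_zero_iff.1 (by rw [hunit]; exact one_ne_zero))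

lemma lipschitzWith_one_of_norm_deriv_eq_one {E : Type*} [NormedAddCommGroup E]
    [NormedSpace ℝ E] {γ : ℝ → E} (hunit : ∀ u, ‖deriv γ u‖ = 1) : LipschitzWith 1 γ :=
  lipschitzWith_of_nnnorm_deriv_le (differentiable_of_norm_deriv_eq_one hunit)
    fun u => NNReal.coe_le_coe.1 (by simp [hunit u])

lemma exists_areaBound (n : ℕ) {p q : ℝ} (M : ℝ) (hq : 0 < q) (hp : 2 / 3 * q + 1 < p) :
    ∃ B α : ℝ, 0 ≤ B ∧ 0 < α ∧
      ∀ γ : ℝ → EuclideanSpace ℝ (Fin n), InAM p q M γ → AreaBound B α γ :=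
  ⟨_, _, by positivity, div_pos (by linarith) (by linarith),
    fun _ ⟨_, hper, _, hunit, hE⟩ => areaBound_of_menger_le (by linarith) hq hper
      (lipschitzWith_one_of_norm_deriv_eq_one hunit) hunit hE⟩

end Energy

section Oscillation

/-- The oscillation of `f` over distances at most `r` is at most `ε`. -/
def OscillationLE {X Y : Type*} [PseudoMetricSpace X] [PseudoMetricSpace Y] (f : X → Y)
    (r ε : ℝ) : Prop :=
  ∀ ⦃u v : X⦄, dist u v ≤ r → dist (f u) (f v) ≤ ε

lemma OscillationLE.mono {X Y : Type*} [PseudoMetricSpace X] [PseudoMetricSpace Y] {f : X → Y}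
    {r r' ε ε' : ℝ} (hf : OscillationLE f r ε) (hr : r' ≤ r) (hε : ε ≤ ε') :
    OscillationLE f r' ε' := fun _ _ huv => (hf (huv.trans hr)).trans hε

/-- Continuity method: the set of scales at which the oscillation is at most `2 * ε` cannot end
before `r`, since at such a scale the oscillation is in fact at most `ε` and by uniform continuity
it grows by at most another `ε` over a fixed further distance. -/
lemma oscillationLE_of_uniformContinuous_of_bootstrap {X Y : Type*} [SeminormedAddCommGroup X]
    [NormedSpace ℝ X] [PseudoMetricSpace Y] {f : X → Y} (hf : UniformContinuous f) {r ε : ℝ}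
    (hε : 0 < ε) (hstep : ∀ r' ≤ r, OscillationLE f r' (2 * ε) → OscillationLE f r' ε) :
    OscillationLE f r ε := by
  obtain ⟨δ, hδ, hfδ⟩ := Metric.uniformContinuous_iff_le.1 hf ε hε
  have grow (k : ℕ) : OscillationLE f (min r (k * δ)) ε := by
    induction k with
    | zero =>
      refine fun u v huv => hfδ (huv.trans ?_)
      simpa using Or.inr hδ.le
    | succ k ih =>
      refine hstep _ (min_le_left _ _) fun u v huv => ?_
      have hr : 0 ≤ r := dist_nonneg.trans (huv.trans (min_le_left _ _))
      obtain ⟨w, huw, hwv⟩ : ∃ w, dist u w ≤ min r (k * δ) ∧ dist w v ≤ δ := by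
        refine exists_dist_le_le (by positivity) hδ.le (huv.trans ?_)
        rw [Nat.cast_succ, add_one_mul, add_comm δ, ← min_add_add_right]
        exact min_le_min_right _ (by linarith)
      linarith [dist_triangle (f u) (f w) (f v), ih huw, hfδ hwv]
  obtain ⟨k, hk⟩ := exists_nat_ge (r / δ)
  rw [div_le_iff₀ hδ] at hk
  simpa [min_eq_left hk] using grow k

lemma continuous_lift_of_periodic {X : Type*} [TopologicalSpace X] {f : ℝ → X} {T : ℝ}
    (hf : Continuous f) (hper : Function.Periodic f T) : Continuous hper.lift :=
  hf.quotient_lift _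

lemma uniformContinuous_of_periodic {X : Type*} [UniformSpace X] {f : ℝ → X} {T : ℝ}
    (hT : 0 < T) (hf : Continuous f) (hper : Function.Periodic f T) : UniformContinuous f :=
  have : Fact (0 < T) := ⟨hT⟩
  (CompactSpace.uniformContinuous_of_continuous (continuous_lift_of_periodic hf hper)).comp
    (uniformContinuous_addMonoidHom_of_continuous (f := QuotientAddGroup.mk' _)
      (AddCircle.continuous_mk' T))

lemma periodic_deriv {E : Type*} [NormedAddCommGroup E] [NormedSpace ℝ E] {f : ℝ → E} {T : ℝ}
    (hper : Function.Periodic f T) : Function.Periodic (deriv f) T := fun x => by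
  rw [← deriv_comp_add_const, funext hper]

lemma exists_pos_le_mul_rpow_le {α : ℝ} (hα : 0 < α) {a ε : ℝ} (ha : 0 < a) (hε : 0 < ε)
    (K : ℝ) : ∃ δ, 0 < δ ∧ δ ≤ a ∧ K * δ ^ α ≤ ε := by
  have hlim : Tendsto (fun δ : ℝ => K * δ ^ α) (𝓝[>] 0) (𝓝 0) := by
    have := (Real.continuousAt_rpow_const 0 α (Or.inr hα.le)).tendsto.const_mul K
    rw [Real.zero_rpow hα.ne', mul_zero] at this
    exact this.mono_left nhdsWithin_le_nhds
  have hδa : ∀ᶠ δ in 𝓝[>] (0 : ℝ), δ ≤ a := nhdsWithin_le_nhds (Iic_mem_nhds ha)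
  obtain ⟨δ, hKδ, hδa, hδ⟩ :=
    ((hlim.eventually (Iic_mem_nhds hε)).and (hδa.and self_mem_nhdsWithin)).exists
  exact ⟨δ, hδ, hδa, hKδ⟩

end Oscillation

section Chord

variable {E : Type*} [NormedAddCommGroup E] [NormedSpace ℝ E] {γ : ℝ → E} {r ε u v : ℝ}

lemma norm_sub_sub_smul_deriv_le (hγ : Differentiable ℝ γ) (hosc : OscillationLE (deriv γ) r ε)
    (huv : dist u v ≤ r) : ‖γ v - γ u - (v - u) • deriv γ u‖ ≤ ε * dist u v := by
  have hderiv (t : ℝ) : HasDerivAt (fun t => γ t - t • deriv γ u) (deriv γ t - deriv γ u) t := by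
    simpa using (hγ t).hasDerivAt.fun_sub ((hasDerivAt_id t).smul_const (deriv γ u))
  have hbound : ∀ t ∈ Metric.closedBall u r, ‖deriv γ t - deriv γ u‖ ≤ ε := fun t ht => by
    rw [← dist_eq_norm]
    exact hosc ht
  have := (convex_closedBall u r).norm_image_sub_le_of_norm_hasDerivWithin_le
    (fun t _ => (hderiv t).hasDerivWithinAt) hbound
    (Metric.mem_closedBall_self (dist_nonneg.trans huv)) (Metric.mem_closedBall'.2 huv)
  rw [dist_comm, dist_eq_norm]
  refine le_trans (le_of_eq ?_) this
  rw [sub_smul]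
  congr 1
  abel

lemma norm_slope_sub_deriv_le (hγ : Differentiable ℝ γ) (hosc : OscillationLE (deriv γ) r ε)
    (hne : u ≠ v) (huv : dist u v ≤ r) : ‖slope γ u v - deriv γ u‖ ≤ ε := by
  have hvu : v - u ≠ 0 := sub_ne_zero.2 hne.symm
  have heq : slope γ u v - deriv γ u = (v - u)⁻¹ • (γ v - γ u - (v - u) • deriv γ u) := by
    rw [smul_sub _ _ ((v - u) • _), inv_smul_smul₀ hvu, slope_def_module]
  rw [heq, norm_smul, norm_inv, inv_mul_le_iff₀ (norm_pos_iff.2 hvu), ← dist_eq_norm v u,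
    dist_comm v, mul_comm]
  exact norm_sub_sub_smul_deriv_le hγ hosc huv

lemma mul_dist_le_dist_of_oscillationLE (hunit : ∀ u, ‖deriv γ u‖ = 1)
    (hosc : OscillationLE (deriv γ) r ε) (huv : dist u v ≤ r) :
    (1 - ε) * dist u v ≤ dist (γ u) (γ v) := by
  have hchord := norm_sub_sub_smul_deriv_le (differentiable_of_norm_deriv_eq_one hunit) hosc huv
  have hnorm : ‖(v - u) • deriv γ u‖ = dist u v := by
    rw [norm_smul, hunit, mul_one, dist_comm, dist_eq_norm]
  have := norm_sub_norm_le ((v - u) • deriv γ u) (γ v - γ u)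
  rw [norm_sub_rev _ (γ v - γ u), hnorm, ← dist_eq_norm (γ v), dist_comm (γ v)] at this
  linarith

end Chord

lemma dist_le_mul_abs_rpow_of_tendsto_of_dist_half_le {X : Type*} [PseudoMetricSpace X]
    {T : ℝ → X} {τ : X} {K α s : ℝ} (hα : 0 < α) (hT : Tendsto T (𝓝[≠] 0) (𝓝 τ)) (hs : s ≠ 0)
    (hhalf : ∀ t, t ≠ 0 → |t| ≤ |s| → dist (T t) (T (t / 2)) ≤ K * |t| ^ α) :
    dist (T s) τ ≤ K / (1 - (1 / 2) ^ α) * |s| ^ α := by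
  have hne (j : ℕ) : s / 2 ^ j ≠ 0 := by positivity
  have habs (j : ℕ) : |s / 2 ^ j| = |s| * (1 / 2) ^ j := by
    rw [abs_div, abs_of_pos (by positivity : (0 : ℝ) < 2 ^ j), one_div_pow, mul_one_div]
  have hgeom (j : ℕ) :
      dist (T (s / 2 ^ j)) (T (s / 2 ^ (j + 1))) ≤ K * |s| ^ α * ((1 / 2) ^ α) ^ j := by
    have := hhalf _ (hne j) <| by
      rw [habs]
      exact mul_le_of_le_one_right (abs_nonneg s) (pow_le_one₀ (by norm_num) (by norm_num))
    rwa [habs, Real.mul_rpow (abs_nonneg s) (by positivity), ← Real.rpow_pow_comm (by norm_num),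
      ← mul_assoc, div_div, ← pow_succ] at this
  have hlim : Tendsto (fun j : ℕ => T (s / 2 ^ j)) atTop (𝓝 τ) := by
    refine hT.comp (tendsto_nhdsWithin_iff.2 ⟨?_, Eventually.of_forall hne⟩)
    have := (tendsto_pow_atTop_nhds_zero_of_lt_one (r := (1 / 2 : ℝ)) (by norm_num)
      (by norm_num)).const_mul s
    simpa [div_eq_mul_inv] using this
  have := dist_le_of_le_geometric_of_tendsto₀ _ _
    (Real.rpow_lt_one (by norm_num) (by norm_num) hα) hgeom hlim
  rw [div_mul_eq_mul_div]
  simpa using this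

section Tangent

variable {n : ℕ} {γ : ℝ → EuclideanSpace ℝ (Fin n)} {B α r : ℝ}

lemma wedgeNorm_slope_slope_half_le (hlip : LipschitzWith 1 γ) (hA : AreaBound B α γ) (u : ℝ)
    {t : ℝ} (ht : t ≠ 0) (ht1 : |t| ≤ 1) :
    wedgeNorm (slope γ u (u + t)) (slope γ u (u + t / 2)) ≤ 2 * B * |t| ^ α := by
  have ht0 := abs_pos.2 ht
  have hdist (s : ℝ) : dist (γ (u + s)) (γ u) ≤ |s| := by simpa using hlip.dist_le_mul (u + s) u
  have hhalf : |t / 2| = |t| / 2 := by rw [abs_div, abs_two]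
  have harea := hA ht0 ht1 (hdist t) ((hdist (t / 2)).trans (by linarith))
  rw [Real.rpow_add ht0, Real.rpow_two] at harea
  rw [slope_def_module, slope_def_module, wedgeNorm_smul_left, wedgeNorm_smul_right,
    add_sub_cancel_left, add_sub_cancel_left, abs_inv, abs_inv, hhalf]
  calc |t|⁻¹ * ((|t| / 2)⁻¹ * wedgeNorm (γ (u + t) - γ u) (γ (u + t / 2) - γ u))
      ≤ |t|⁻¹ * ((|t| / 2)⁻¹ * (B * (|t| ^ 2 * |t| ^ α))) := by gcongr
    _ = 2 * B * |t| ^ α := by field_simp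

lemma tendsto_normalize_slope {E : Type*} [NormedAddCommGroup E] [NormedSpace ℝ E] {γ : ℝ → E}
    {u : ℝ} (hunit : ‖deriv γ u‖ = 1) :
    Tendsto (fun t => NormedSpace.normalize (slope γ u (u + t))) (𝓝[≠] 0) (𝓝 (deriv γ u)) := by
  have hne : deriv γ u ≠ 0 := norm_ne_zero_iff.1 (by rw [hunit]; exact one_ne_zero)
  have hslope : Tendsto (fun t => slope γ u (u + t)) (𝓝[≠] 0) (𝓝 (deriv γ u)) := by
    simpa [slope_def_module] using
      (differentiableAt_of_deriv_ne_zero hne).hasDerivAt.tendsto_slope_zero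
  have := (hslope.norm.inv₀ (norm_ne_zero_iff.2 hne)).smul hslope
  rwa [hunit, inv_one, one_smul] at this

lemma dist_normalize_slope_deriv_le (hα : 0 < α) (hunit : ∀ u, ‖deriv γ u‖ = 1)
    (hA : AreaBound B α γ) (hr1 : r ≤ 1) (hosc : OscillationLE (deriv γ) r (1 / 4)) {u v : ℝ}
    (hne : u ≠ v) (huv : dist u v ≤ r) :
    dist (NormedSpace.normalize (slope γ u v)) (deriv γ u) ≤
      6 * B / (1 - (1 / 2) ^ α) * dist u v ^ α := by
  have hclose {t : ℝ} (ht : t ≠ 0) (htr : |t| ≤ r) : ‖slope γ u (u + t) - deriv γ u‖ ≤ 1 / 4 :=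
    norm_slope_sub_deriv_le (differentiable_of_norm_deriv_eq_one hunit) hosc (by simpa using ht)
      (by simpa [dist_comm] using htr)
  have hvu : |v - u| = dist u v := by rw [dist_comm, Real.dist_eq]
  have := dist_le_mul_abs_rpow_of_tendsto_of_dist_half_le (K := 6 * B) hα
    (tendsto_normalize_slope (hunit u)) (sub_ne_zero.2 hne.symm) fun t ht htv => ?_
  · rwa [add_sub_cancel, hvu] at this
  have htr : |t| ≤ r := htv.trans (hvu.trans_le huv)
  have htr2 : |t / 2| ≤ r := by
    rw [abs_div, abs_two]
    linarith [abs_nonneg t]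
  have := wedgeNorm_slope_slope_half_le (lipschitzWith_one_of_norm_deriv_eq_one hunit) hA u ht
    (htr.trans hr1)
  rw [dist_eq_norm]
  refine (norm_normalize_sub_normalize_le (hunit u) (hclose ht htr)
    (hclose (by simpa using ht) htr2)).trans ?_
  linarith

/-- The secant from `u` to `v` is close to the tangents at both of its endpoints. -/
lemma dist_deriv_le_of_oscillationLE (hα : 0 < α) (hunit : ∀ u, ‖deriv γ u‖ = 1)
    (hA : AreaBound B α γ) (hr1 : r ≤ 1) (hosc : OscillationLE (deriv γ) r (1 / 4)) {u v : ℝ}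
    (huv : dist u v ≤ r) :
    dist (deriv γ u) (deriv γ v) ≤ 12 * B / (1 - (1 / 2) ^ α) * dist u v ^ α := by
  rcases eq_or_ne u v with rfl | hne
  · simp [Real.zero_rpow hα.ne']
  have hu := dist_normalize_slope_deriv_le hα hunit hA hr1 hosc hne huv
  have hv := dist_normalize_slope_deriv_le hα hunit hA hr1 hosc hne.symm (dist_comm u v ▸ huv)
  rw [slope_comm, dist_comm v] at hv
  calc dist (deriv γ u) (deriv γ v)
      ≤ 6 * B / (1 - (1 / 2) ^ α) * dist u v ^ α + 6 * B / (1 - (1 / 2) ^ α) * dist u v ^ α :=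
        (dist_triangle_left _ _ _).trans (add_le_add hu hv)
    _ = 12 * B / (1 - (1 / 2) ^ α) * dist u v ^ α := by ring

lemma exists_oscillationLE_deriv (n : ℕ) (hB : 0 ≤ B) (hα : 0 < α) {ε : ℝ} (hε : 0 < ε) :
    ∃ δ, 0 < δ ∧ δ ≤ 1 ∧ ∀ γ : ℝ → EuclideanSpace ℝ (Fin n), ContDiff ℝ 1 γ →
      Function.Periodic γ 1 → (∀ u, ‖deriv γ u‖ = 1) → AreaBound B α γ →
      OscillationLE (deriv γ) δ ε := by
  set K := 12 * B / (1 - (1 / 2) ^ α)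
  have hK0 : 0 ≤ K := by
    have : (1 / 2 : ℝ) ^ α < 1 := Real.rpow_lt_one (by norm_num) (by norm_num) hα
    exact div_nonneg (by positivity) (by linarith)
  obtain ⟨δ, hδ, hδ1, hKδ⟩ := exists_pos_le_mul_rpow_le hα one_pos
    (by positivity : 0 < min ε (1 / 8)) K
  refine ⟨δ, hδ, hδ1, fun γ hγ hper hunit hA =>
    OscillationLE.mono ?_ le_rfl (min_le_left ε (1 / 8))⟩
  have huc := uniformContinuous_of_periodic one_pos (hγ.continuous_deriv le_rfl)
    (periodic_deriv hper)
  refine oscillationLE_of_uniformContinuous_of_bootstrap huc (by positivity)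
    fun r hr hosc u v huv => ?_
  calc dist (deriv γ u) (deriv γ v) ≤ K * dist u v ^ α :=
        dist_deriv_le_of_oscillationLE hα hunit hA (hr.trans hδ1)
          (hosc.mono le_rfl (by linarith [min_le_right ε (1 / 8)])) huv
    _ ≤ K * δ ^ α := by gcongr; exact huv.trans hr
    _ ≤ min ε (1 / 8) := hKδ

end Tangent

section ChordArc

/-- The chord-arc (bi-Lipschitz) bound `c * |u - v| ≤ |γ u - γ v|` for a `1`-periodic curve, with
`|u - v|` the distance in `ℝ/ℤ`, taken as the norm of the difference in `UnitAddCircle`. -/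
def ChordArcBound {X : Type*} [PseudoMetricSpace X] (c : ℝ) (γ : ℝ → X) : Prop :=
  ∀ u v : ℝ, c * ‖((u - v : ℝ) : UnitAddCircle)‖ ≤ dist (γ u) (γ v)

lemma ChordArcBound.injCircle {n : ℕ} {c : ℝ} {γ : ℝ → EuclideanSpace ℝ (Fin n)}
    (hγ : ChordArcBound c γ) (hc : 0 < c) : InjCircle γ := by
  intro u v huv
  have h := hγ v u
  rw [huv, dist_self] at h
  have hzero : ((v - u : ℝ) : UnitAddCircle) = 0 :=
    norm_le_zero_iff.1 (nonpos_of_mul_nonpos_right h hc)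
  obtain ⟨k, hk⟩ := (AddCircle.coe_eq_zero_iff 1).1 hzero
  refine ⟨k, ?_⟩
  rw [zsmul_one] at hk
  linarith

lemma ChordArcBound.of_tendsto {X : Type*} [PseudoMetricSpace X] {c : ℝ} {γ : ℕ → ℝ → X}
    {γ₀ : ℝ → X} (hγ : ∀ k, ChordArcBound c (γ k))
    (hlim : ∀ u, Tendsto (fun k => γ k u) atTop (𝓝 (γ₀ u))) : ChordArcBound c γ₀ := fun u v =>
  ge_of_tendsto' ((hlim u).dist (hlim v)) fun k => hγ k u v

lemma inner_deriv_eq_zero_of_isLocalMin_dist {E : Type*} [NormedAddCommGroup E]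
    [InnerProductSpace ℝ E] {γ : ℝ → E} {x : E} {t : ℝ} (hγ : DifferentiableAt ℝ γ t)
    (hmin : IsLocalMin (fun s => dist (γ s) x) t) : inner ℝ (γ t - x) (deriv γ t) = 0 := by
  have hsq : IsLocalMin (fun s => ‖γ s - x‖ ^ 2) t := by
    filter_upwards [hmin] with s hs
    rw [← dist_eq_norm, ← dist_eq_norm]
    gcongr
  linarith [hsq.hasDerivAt_eq_zero (hγ.hasDerivAt.sub_const x).norm_sq]

variable {n : ℕ} {γ : ℝ → EuclideanSpace ℝ (Fin n)} {B α r ε : ℝ}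

/-- Where the chord is orthogonal to the curve, moving along the curve by the length `δ` of the
chord spans an area comparable to `δ ^ 2`, which the area bound forbids for small `δ`. -/
lemma one_sub_le_of_inner_eq_zero (hunit : ∀ u, ‖deriv γ u‖ = 1) (hA : AreaBound B α γ)
    (hosc : OscillationLE (deriv γ) r ε) {u v δ : ℝ} (hδ : dist (γ v) (γ u) = δ) (hδ0 : 0 < δ)
    (hδr : δ ≤ r) (hδ1 : 2 * δ ≤ 1) (hcrit : inner ℝ (γ v - γ u) (deriv γ v) = 0) :
    1 - ε ≤ 4 * B * (2 * δ) ^ α := by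
  have hdist : dist v (v + δ) = δ := by simp [abs_of_pos hδ0]
  have hnorm : ‖γ v - γ u‖ = δ := by rw [← dist_eq_norm, hδ]
  have hstep : dist (γ (v + δ)) (γ v) ≤ δ := by
    simpa [dist_comm, hdist] using
      (lipschitzWith_one_of_norm_deriv_eq_one hunit).dist_le_mul v (v + δ)
  have hchord : ‖δ • deriv γ v - (γ (v + δ) - γ v)‖ ≤ ε * δ := by
    simpa [hdist, norm_sub_rev] using norm_sub_sub_smul_deriv_le
      (differentiable_of_norm_deriv_eq_one hunit) hosc (hdist.trans_le hδr)
  have harea : wedgeNorm (γ v - γ u) (γ (v + δ) - γ v) ≤ B * (2 * δ) ^ (2 + α) := by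
    rw [← wedgeNorm_add_self_right, sub_add_sub_cancel]
    exact hA (by positivity) hδ1 (by linarith)
      ((dist_triangle _ (γ v) _).trans (by linarith))
  have hsq : δ * δ ≤ B * (2 * δ) ^ (2 + α) + δ * (ε * δ) := calc
    δ * δ = wedgeNorm (γ v - γ u) (δ • deriv γ v) := by
      rw [wedgeNorm_smul_right, wedgeNorm_of_inner_eq_zero hcrit, hunit, hnorm, abs_of_pos hδ0,
        mul_one]
    _ ≤ wedgeNorm (γ v - γ u) (γ (v + δ) - γ v)
        + ‖γ v - γ u‖ * ‖δ • deriv γ v - (γ (v + δ) - γ v)‖ :=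
      wedgeNorm_le_add_norm_mul_norm_sub _ _ _
    _ ≤ B * (2 * δ) ^ (2 + α) + δ * (ε * δ) := by rw [hnorm]; gcongr
  rw [Real.rpow_add (by positivity), Real.rpow_two] at hsq
  refine le_of_mul_le_mul_right ?_ (mul_pos hδ0 hδ0)
  linarith

lemma InjCircle.ne_of_mem_Ioo (hinj : InjCircle γ) {u v : ℝ} (hv : v ∈ Ioo u (u + 1)) :
    γ v ≠ γ u := by
  intro heq
  obtain ⟨k, hk⟩ := hinj u v heq.symm
  have hk0 : (0 : ℝ) < k := by linarith [hv.1]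
  have hk1 : (k : ℝ) < 1 := by linarith [hv.2]
  norm_cast at hk0 hk1
  omega

lemma le_dist_of_mem_Icc_add {δ₀ : ℝ} (hB : 0 ≤ B) (hα : 0 < α) (hr0 : 0 < r) (hr1 : r ≤ 1)
    (hδ₀r : δ₀ ≤ r / 2) (hδ₀B : 4 * B * (2 * δ₀) ^ α ≤ 1 / 2) (hper : Function.Periodic γ 1)
    (hinj : InjCircle γ) (hunit : ∀ u, ‖deriv γ u‖ = 1) (hA : AreaBound B α γ)
    (hosc : OscillationLE (deriv γ) r (1 / 4)) {u v : ℝ} (hv : v ∈ Icc (u + r) (u + 1 - r)) :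
    δ₀ ≤ dist (γ v) (γ u) := by
  have hdiff := differentiable_of_norm_deriv_eq_one hunit
  obtain ⟨t, ht, hmin⟩ := isCompact_Icc.exists_isMinOn ⟨v, hv⟩
    (hdiff.continuous.dist continuous_const : Continuous fun s => dist (γ s) (γ u)).continuousOn
  refine le_trans ?_ (hmin hv)
  by_contra! hlt
  have hnear {s : ℝ} (hs : dist s u = r) (hst : γ s = γ t) : False := by
    have := mul_dist_le_dist_of_oscillationLE hunit hosc hs.le
    rw [hs, hst] at this
    linarith
  have htl : t ≠ u + r := by
    rintro rfl
    exact hnear (by simp [abs_of_pos hr0]) rfl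
  have htr : t ≠ u + 1 - r := by
    rintro rfl
    refine hnear (s := u - r) (by simp [abs_of_pos hr0]) ?_
    rw [← hper (u - r)]
    ring_nf
  have hlocal : IsLocalMin (fun s => dist (γ s) (γ u)) t :=
    hmin.isLocalMin (Icc_mem_nhds (ht.1.lt_of_ne' htl) (ht.2.lt_of_ne htr))
  have hpos : 0 < dist (γ t) (γ u) :=
    dist_pos.2 (hinj.ne_of_mem_Ioo ⟨by linarith [ht.1], by linarith [ht.2]⟩)
  have hcrit := one_sub_le_of_inner_eq_zero hunit hA hosc rfl hpos (by linarith) (by linarith)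
    (inner_deriv_eq_zero_of_isLocalMin_dist (hdiff t) hlocal)
  have : 4 * B * (2 * dist (γ t) (γ u)) ^ α ≤ 4 * B * (2 * δ₀) ^ α := by gcongr
  linarith

/-- Nearby parameters are separated because the tangents barely oscillate, all others because the
distance to `γ u` cannot have a small positive minimum. -/
lemma mul_abs_le_dist_add {c : ℝ} (hB : 0 ≤ B) (hα : 0 < α) (hr0 : 0 < r) (hr1 : r ≤ 1)
    (hc : 0 ≤ c) (hcr : c ≤ r / 2) (hcB : 4 * B * (2 * c) ^ α ≤ 1 / 2)
    (hper : Function.Periodic γ 1) (hinj : InjCircle γ) (hunit : ∀ u, ‖deriv γ u‖ = 1)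
    (hA : AreaBound B α γ) (hosc : OscillationLE (deriv γ) r (1 / 4)) (u : ℝ) {s : ℝ}
    (hs : |s| ≤ 1 / 2) : c * |s| ≤ dist (γ (u + s)) (γ u) := by
  rcases le_or_gt |s| r with hsr | hsr
  · have hnear : dist (u + s) u = |s| := by simp
    calc c * |s| ≤ (1 - 1 / 4) * |s| := by gcongr; linarith
      _ ≤ dist (γ (u + s)) (γ u) := by
        rw [← hnear] at hsr ⊢
        exact mul_dist_le_dist_of_oscillationLE hunit hosc hsr
  have hfar {v : ℝ} (hv : v ∈ Icc (u + r) (u + 1 - r)) : c ≤ dist (γ v) (γ u) :=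
    le_dist_of_mem_Icc_add hB hα hr0 hr1 hcr hcB hper hinj hunit hA hosc hv
  refine (mul_le_of_le_one_right hc (by linarith)).trans ?_
  obtain ⟨hs1, hs2⟩ := abs_le.1 hs
  rcases lt_abs.1 hsr with hpos | hneg
  · exact hfar ⟨by linarith, by linarith⟩
  · rw [← hper (u + s)]
    exact hfar ⟨by linarith, by linarith⟩

lemma chordArcBound_of_areaBound {c : ℝ} (hB : 0 ≤ B) (hα : 0 < α) (hr0 : 0 < r) (hr1 : r ≤ 1)
    (hc : 0 ≤ c) (hcr : c ≤ r / 2) (hcB : 4 * B * (2 * c) ^ α ≤ 1 / 2)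
    (hper : Function.Periodic γ 1) (hinj : InjCircle γ) (hunit : ∀ u, ‖deriv γ u‖ = 1)
    (hA : AreaBound B α γ) (hosc : OscillationLE (deriv γ) r (1 / 4)) : ChordArcBound c γ := by
  intro u v
  have hγu : γ u = γ (v + (u - v - round (u - v))) := by
    rw [← hper.sub_int_mul_eq (round (u - v))]
    ring_nf
  rw [UnitAddCircle.norm_eq, hγu]
  exact mul_abs_le_dist_add hB hα hr0 hr1 hc hcr hcB hper hinj hunit hA hosc v (abs_sub_round _)

lemma exists_chordArcBound (n : ℕ) {p q : ℝ} (M : ℝ) (hq : 0 < q) (hp : 2 / 3 * q + 1 < p) :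
    ∃ c, 0 < c ∧ ∀ γ : ℝ → EuclideanSpace ℝ (Fin n), InAM p q M γ → ChordArcBound c γ := by
  obtain ⟨B, α, hB, hα, harea⟩ := exists_areaBound n M hq hp
  obtain ⟨r, hr, hr1, hosc⟩ := exists_oscillationLE_deriv n hB hα (by norm_num : (0 : ℝ) < 1 / 4)
  obtain ⟨d, hd, hdr, hdB⟩ := exists_pos_le_mul_rpow_le hα hr one_half_pos (4 * B)
  refine ⟨d / 2, by positivity, fun γ hγ => ?_⟩
  obtain ⟨hC, hper, hinj, hunit, -⟩ := id hγ
  exact chordArcBound_of_areaBound hB hα hr hr1 (by positivity) (by linarith)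
    (by rwa [mul_div_cancel₀ _ two_ne_zero]) hper hinj hunit (harea γ hγ)
    (hosc γ hC hper hunit (harea γ hγ))

end ChordArc

section Semicontinuity

variable {n : ℕ} {p q : ℝ}

/-- The integrand of `menger`, as a function of the three points `x.1` and the three velocities
`x.2`. -/
def mengerIntegrand (p q : ℝ)
    (x : (EuclideanSpace ℝ (Fin n) × EuclideanSpace ℝ (Fin n) × EuclideanSpace ℝ (Fin n)) ×
      (EuclideanSpace ℝ (Fin n) × EuclideanSpace ℝ (Fin n) × EuclideanSpace ℝ (Fin n))) : ℝ≥0∞ :=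
  ENNReal.ofReal (‖x.2.1‖ * ‖x.2.2.1‖ * ‖x.2.2.2‖ * invR p q x.1.1 x.1.2.1 x.1.2.2)

lemma continuousAt_invR (hp : 0 < p) (hq : 0 < q)
    {x : EuclideanSpace ℝ (Fin n) × EuclideanSpace ℝ (Fin n) × EuclideanSpace ℝ (Fin n)}
    (hx : ‖x.2.1 - x.2.2‖ * ‖x.2.1 - x.1‖ * ‖x.2.2 - x.1‖ ≠ 0) :
    ContinuousAt (fun y : EuclideanSpace ℝ (Fin n) × EuclideanSpace ℝ (Fin n) ×
      EuclideanSpace ℝ (Fin n) => invR p q y.1 y.2.1 y.2.2) x := by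
  have hwedge : Continuous fun y : EuclideanSpace ℝ (Fin n) × EuclideanSpace ℝ (Fin n) ×
      EuclideanSpace ℝ (Fin n) => wedgeNorm (y.2.1 - y.1) (y.2.2 - y.1) :=
    continuous_wedgeNorm.comp (f := fun y : EuclideanSpace ℝ (Fin n) × EuclideanSpace ℝ (Fin n) ×
      EuclideanSpace ℝ (Fin n) => (y.2.1 - y.1, y.2.2 - y.1)) (by fun_prop)
  refine (hwedge.continuousAt.rpow_const (Or.inr hq.le)).div
    (ContinuousAt.rpow_const (by fun_prop) (Or.inr hp.le)) ?_
  exact (Real.rpow_pos_of_pos (lt_of_le_of_ne (by positivity) hx.symm) p).ne'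

lemma lowerSemicontinuous_mengerIntegrand (hp : 0 < p) (hq : 0 < q) :
    LowerSemicontinuous (mengerIntegrand (n := n) p q) := by
  intro x
  by_cases hx : ‖x.1.2.1 - x.1.2.2‖ * ‖x.1.2.1 - x.1.1‖ * ‖x.1.2.2 - x.1.1‖ = 0
  · -- `x / 0 = 0` is the least possible value, so semicontinuity is automatic here.
    intro b hb
    simp [mengerIntegrand, invR, hx, Real.zero_rpow hp.ne'] at hb
  · refine (ENNReal.continuous_ofReal.continuousAt.comp ?_).lowerSemicontinuousAt
    exact ContinuousAt.mul (by fun_prop)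
      ((continuousAt_invR hp hq hx).comp (f := Prod.fst) continuousAt_fst)

lemma lintegral_lintegral_lintegral_liminf_le {X Y Z : Type*} [MeasurableSpace X]
    [MeasurableSpace Y] [MeasurableSpace Z] {μ : Measure X} {ν : Measure Y} {ρ : Measure Z}
    [SFinite ν] [SFinite ρ] {F : ℕ → (X × Y) × Z → ℝ≥0∞} (hF : ∀ k, Measurable (F k)) :
    ∫⁻ x, ∫⁻ y, ∫⁻ z, liminf (fun k => F k ((x, y), z)) atTop ∂ρ ∂ν ∂μ ≤
      liminf (fun k => ∫⁻ x, ∫⁻ y, ∫⁻ z, F k ((x, y), z) ∂ρ ∂ν ∂μ) atTop := by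
  have hFz (k : ℕ) := (hF k).lintegral_prod_right' (ν := ρ)
  have hFy (k : ℕ) := (hFz k).lintegral_prod_right' (ν := ν)
  refine (lintegral_mono fun x => ?_).trans (lintegral_liminf_le hFy)
  refine (lintegral_mono fun y => ?_).trans
    (lintegral_liminf_le fun k => (hFz k).comp measurable_prodMk_left)
  exact lintegral_liminf_le fun k => (hF k).comp measurable_prodMk_left

lemma menger_le_liminf (hp : 0 < p) (hq : 0 < q) {γ γ' : ℕ → ℝ → EuclideanSpace ℝ (Fin n)}
    {γ₀ γ₀' : ℝ → EuclideanSpace ℝ (Fin n)} (hγ : ∀ k, Measurable (γ k))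
    (hγ' : ∀ k, Measurable (γ' k)) (hlim : ∀ u, Tendsto (fun k => γ k u) atTop (𝓝 (γ₀ u)))
    (hlim' : ∀ u, Tendsto (fun k => γ' k u) atTop (𝓝 (γ₀' u))) :
    menger p q γ₀ γ₀' ≤ liminf (fun k => menger p q (γ k) (γ' k)) atTop := by
  have hlsc := lowerSemicontinuous_mengerIntegrand (n := n) hp hq
  let F (k : ℕ) (u : (ℝ × ℝ) × ℝ) : ℝ≥0∞ := mengerIntegrand p q
    ((γ k u.1.1, γ k u.1.2, γ k u.2), (γ' k u.1.1, γ' k u.1.2, γ' k u.2))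
  have hF (k : ℕ) : Measurable (F k) := hlsc.measurable.comp (by fun_prop)
  have hle (u v w : ℝ) : mengerIntegrand p q ((γ₀ u, γ₀ v, γ₀ w), (γ₀' u, γ₀' v, γ₀' w)) ≤
      liminf (fun k => F k ((u, v), w)) atTop :=
    (hlsc.le_liminf _).trans <| Tendsto.liminf_le_liminf_comp <|
      ((hlim u).prodMk_nhds ((hlim v).prodMk_nhds (hlim w))).prodMk_nhds
        ((hlim' u).prodMk_nhds ((hlim' v).prodMk_nhds (hlim' w)))
  calc menger p q γ₀ γ₀'
      ≤ ∫⁻ u in Ico (0 : ℝ) 1, ∫⁻ v in Ico (0 : ℝ) 1, ∫⁻ w in Ico (0 : ℝ) 1,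
          liminf (fun k => F k ((u, v), w)) atTop :=
        lintegral_mono fun u => lintegral_mono fun v => lintegral_mono fun w => hle u v w
    _ ≤ liminf (fun k => menger p q (γ k) (γ' k)) atTop :=
        lintegral_lintegral_lintegral_liminf_le hF

end Semicontinuity

section Compactness

lemma exists_subseq_tendstoUniformly_of_periodic {X : Type*} [MetricSpace X] {K : Set X}
    (hK : IsCompact K) {T : ℝ} (hT : 0 < T) {f : ℕ → ℝ → X}
    (hper : ∀ k, Function.Periodic (f k) T) (hf : Equicontinuous f) (hfK : ∀ k u, f k u ∈ K) :
    ∃ (φ : ℕ → ℕ) (g : ℝ → X), StrictMono φ ∧ TendstoUniformly (fun j => f (φ j)) g atTop := by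
  have : Fact (0 < T) := ⟨hT⟩
  let F (k : ℕ) : BoundedContinuousFunction (AddCircle T) X := .mkOfCompact
    ⟨(hper k).lift, continuous_lift_of_periodic (hf.continuous k) (hper k)⟩
  have hF : Equicontinuous fun k => ⇑(F k) := equicontinuous_iff_continuous.2 <|
    isQuotientMap_quotient_mk'.continuous_iff.2 (equicontinuous_iff_continuous.1 hf)
  have hcompact : IsCompact (closure (range F)) := by
    refine BoundedContinuousFunction.arzela_ascoli K hK _ ?_ ?_
    · rintro _ x ⟨k, rfl⟩
      induction x using QuotientAddGroup.induction_on with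
      | H u => exact hfK k u
    · rintro x U hU
      filter_upwards [hF x U hU] with y hy
      rintro ⟨_, k, rfl⟩
      exact hy k
  obtain ⟨G, -, φ, hφ, hG⟩ := hcompact.tendsto_subseq fun k => subset_closure (mem_range_self k)
  exact ⟨φ, fun u => G u, hφ, (BoundedContinuousFunction.tendsto_iff_tendstoUniformly.1 hG).comp
    fun u : ℝ => (u : AddCircle T)⟩

lemma norm_le_of_periodic_of_lipschitzWith {E : Type*} [SeminormedAddCommGroup E] {f : ℝ → E}
    {T : ℝ} {C : NNReal} (hT : 0 < T) (hper : Function.Periodic f T) (hf : LipschitzWith C f)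
    (h0 : f 0 = 0) (u : ℝ) : ‖f u‖ ≤ C * T := by
  obtain ⟨t, ht, hut⟩ := hper.exists_mem_Ico₀ hT u
  have hft := hf.dist_le_mul t 0
  rw [h0, dist_zero_right, dist_zero_right, Real.norm_of_nonneg ht.1] at hft
  rw [hut]
  exact hft.trans (by gcongr; exact ht.2.le)

lemma exists_subseq_tendstoUniformly_deriv {E : Type*} [NormedAddCommGroup E] [NormedSpace ℝ E]
    [ProperSpace E] {T : ℝ} {C : NNReal} (hT : 0 < T) {f : ℕ → ℝ → E}
    (hf : ∀ k, ContDiff ℝ 1 (f k)) (hper : ∀ k, Function.Periodic (f k) T)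
    (hequi : Equicontinuous fun k => deriv (f k)) (hC : ∀ k u, ‖deriv (f k) u‖ ≤ C)
    (h0 : ∀ k, f k 0 = 0) :
    ∃ (φ : ℕ → ℕ) (g : ℝ → E), StrictMono φ ∧ ContDiff ℝ 1 g ∧
      TendstoUniformly (fun j => f (φ j)) g atTop ∧
      TendstoUniformly (fun j => deriv (f (φ j))) (deriv g) atTop := by
  have hlip (k : ℕ) : LipschitzWith C (f k) :=
    lipschitzWith_of_nnnorm_deriv_le ((hf k).differentiable one_ne_zero) (hC k)
  obtain ⟨φ, g, hφ, hg⟩ := exists_subseq_tendstoUniformly_of_periodic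
    (isCompact_closedBall (0 : E) (C * T)) hT hper
    (LipschitzWith.uniformEquicontinuous f C hlip).equicontinuous fun k u =>
      mem_closedBall_zero_iff.2 (norm_le_of_periodic_of_lipschitzWith hT (hper k) (hlip k) (h0 k) u)
  obtain ⟨ψ, g', hψ, hg'⟩ := exists_subseq_tendstoUniformly_of_periodic
    (isCompact_closedBall (0 : E) C) hT (fun j => periodic_deriv (hper (φ j))) (hequi.comp φ)
    fun j u => mem_closedBall_zero_iff.2 (hC (φ j) u)
  replace hg : TendstoUniformly (fun j => f (φ (ψ j))) g atTop := fun U hU =>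
    hψ.tendsto_atTop.eventually (hg U hU)
  have hderiv (u : ℝ) : HasDerivAt g (g' u) u :=
    hasDerivAt_of_tendstoUniformly hg' (.of_forall fun j t =>
      ((hf (φ (ψ j))).differentiable one_ne_zero t).hasDerivAt) hg.tendsto_at u
  obtain rfl : deriv g = g' := funext fun u => (hderiv u).deriv
  exact ⟨φ ∘ ψ, g, hφ.comp hψ, contDiff_one_iff_deriv.2 ⟨fun u => (hderiv u).differentiableAt,
    hg'.continuous (.of_forall fun j => (hf _).continuous_deriv le_rfl)⟩, hg, hg'⟩

end Compactness

section SequentialCompactness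

variable {n : ℕ} {p q M : ℝ}

lemma InAM.sub_const {γ : ℝ → EuclideanSpace ℝ (Fin n)} (hγ : InAM p q M γ)
    (b : EuclideanSpace ℝ (Fin n)) : InAM p q M fun u => γ u - b := by
  obtain ⟨hC, hper, hinj, hunit, hE⟩ := hγ
  have hmenger : menger p q (fun u => γ u - b) (deriv fun u => γ u - b) =
      menger p q γ (deriv γ) := by
    simp only [menger, invR, sub_sub_sub_cancel_right, deriv_sub_const_fun]
  exact ⟨hC.sub contDiff_const, fun u => congrArg (· - b) (hper u),
    fun u v huv => hinj u v (sub_left_injective huv),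
    fun u => by rw [deriv_sub_const_fun, hunit], hmenger.trans_le hE⟩

lemma uniformEquicontinuous_deriv_of_inAM (hq : 0 < q) (hp : 2 / 3 * q + 1 < p) {ι : Type*}
    {γ : ι → ℝ → EuclideanSpace ℝ (Fin n)} (hγ : ∀ i, InAM p q M (γ i)) :
    UniformEquicontinuous fun i => deriv (γ i) := by
  obtain ⟨B, α, hB, hα, harea⟩ := exists_areaBound n M hq hp
  refine Metric.uniformEquicontinuous_iff.2 fun ε hε => ?_
  obtain ⟨δ, hδ, -, hosc⟩ := exists_oscillationLE_deriv n hB hα (half_pos hε)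
  refine ⟨δ, hδ, fun u v huv i => lt_of_le_of_lt ?_ (half_lt_self hε)⟩
  obtain ⟨hC, hper, -, hunit, -⟩ := id (hγ i)
  exact hosc (γ i) hC hper hunit (harea _ (hγ i)) huv.le

lemma inAM_of_tendsto (hq : 0 < q) (hp : 2 / 3 * q + 1 < p)
    {γ : ℕ → ℝ → EuclideanSpace ℝ (Fin n)} {γ₀ : ℝ → EuclideanSpace ℝ (Fin n)}
    (hγ : ∀ k, InAM p q M (γ k)) (hC₀ : ContDiff ℝ 1 γ₀)
    (hlim : ∀ u, Tendsto (fun k => γ k u) atTop (𝓝 (γ₀ u)))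
    (hlim' : ∀ u, Tendsto (fun k => deriv (γ k) u) atTop (𝓝 (deriv γ₀ u))) :
    InAM p q M γ₀ := by
  obtain ⟨c, hc, hchord⟩ := exists_chordArcBound n M hq hp
  have hchord₀ : ChordArcBound c γ₀ := .of_tendsto (fun k => hchord (γ k) (hγ k)) hlim
  choose hC hper _ hunit hE using hγ
  refine ⟨hC₀, fun u => ?_, hchord₀.injCircle hc, fun u => ?_, ?_⟩
  · exact tendsto_nhds_unique (hlim (u + 1)) (by simpa only [hper _ u] using hlim u)
  · exact tendsto_nhds_unique (hlim' u).norm (by simp only [hunit, tendsto_const_nhds])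
  · calc menger p q γ₀ (deriv γ₀)
        ≤ liminf (fun k => menger p q (γ k) (deriv (γ k))) atTop :=
          menger_le_liminf (by linarith) hq (fun k => (hC k).continuous.measurable)
            (fun k => measurable_deriv (γ k)) hlim hlim'
      _ ≤ ENNReal.ofReal M := liminf_le_of_frequently_le' (Frequently.of_forall hE)

theorem sequential_compactness_general (n : ℕ) (p q M : ℝ) (hq : 0 < q)
    (hp : 2 / 3 * q + 1 < p) (γ : ℕ → ℝ → EuclideanSpace ℝ (Fin n))
    (hγ : ∀ k, InAM p q M (γ k)) :
    ∃ (φ : ℕ → ℕ) (b : ℕ → EuclideanSpace ℝ (Fin n)) (γ₀ : ℝ → EuclideanSpace ℝ (Fin n)),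
      StrictMono φ ∧ InAM p q M γ₀ ∧
      ∀ ε : ℝ, 0 < ε → ∃ N : ℕ, ∀ j ≥ N, ∀ u : ℝ,
        ‖γ (φ j) u - b j - γ₀ u‖ ≤ ε ∧ ‖deriv (γ (φ j)) u - deriv γ₀ u‖ ≤ ε := by
  let f (k : ℕ) (u : ℝ) : EuclideanSpace ℝ (Fin n) := γ k u - γ k 0
  have hf (k : ℕ) : InAM p q M (f k) := (hγ k).sub_const _
  have hderiv (k : ℕ) : deriv (f k) = deriv (γ k) := deriv_sub_const_fun _
  obtain ⟨φ, γ₀, hφ, hC₀, hlim, hlim'⟩ := exists_subseq_tendstoUniformly_deriv (C := 1) one_pos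
    (fun k => (hf k).1) (fun k => (hf k).2.1)
    (uniformEquicontinuous_deriv_of_inAM hq hp hf).equicontinuous
    (fun k u => ((hf k).2.2.2.1 u).le) (fun k => sub_self _)
  refine ⟨φ, fun j => γ (φ j) 0, γ₀, hφ,
    inAM_of_tendsto hq hp (fun j => hf (φ j)) hC₀ hlim.tendsto_at hlim'.tendsto_at, fun ε hε => ?_⟩
  obtain ⟨N, hN⟩ := eventually_atTop.1 ((Metric.tendstoUniformly_iff.1 hlim ε hε).and
    (Metric.tendstoUniformly_iff.1 hlim' ε hε))
  refine ⟨N, fun j hj u => ⟨?_, ?_⟩⟩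
  · rw [← dist_eq_norm, dist_comm]
    exact ((hN j hj).1 u).le
  · rw [← hderiv, ← dist_eq_norm, dist_comm]
    exact ((hN j hj).2 u).le

end SequentialCompactness

/-- **Sequential compactness.** In the sub-critical range, for every `M < ∞`
the set `A_M` is sequentially compact in `C¹` up to translations: any
sequence in `A_M` has a subsequence which, after subtracting suitable
translation vectors `b j`, converges in `C¹` to some `γ₀ ∈ A_M`. -/
theorem sequential_compactness (n : ℕ) (p q M : ℝ)
    (hq : 1 < q) (hp₁ : 2/3 * q + 1 < p) (hp₂ : p < q + 2/3)
    (γ : ℕ → ℝ → EuclideanSpace ℝ (Fin n))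
    (hγ : ∀ k, InAM p q M (γ k)) :
    ∃ (φ : ℕ → ℕ) (b : ℕ → EuclideanSpace ℝ (Fin n))
      (γ₀ : ℝ → EuclideanSpace ℝ (Fin n)),
      StrictMono φ ∧ InAM p q M γ₀ ∧
      ∀ ε : ℝ, 0 < ε → ∃ N : ℕ, ∀ j ≥ N, ∀ u : ℝ,
        ‖γ (φ j) u - b j - γ₀ u‖ ≤ ε ∧
        ‖deriv (γ (φ j)) u - deriv γ₀ u‖ ≤ ε :=
  sequential_compactness_general n p q M (zero_lt_one.trans hq) hp₁ γ hγ
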